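/- Let X_j be an m_j × d real matrix, X_k an m_k × d real matrix, and X_l an m_l × d real matrix, each a partial permutation matrix (all entries in {0,1}, every row sum at most 1, every column sum at most 1). Then the entrywise inequality (X_j X_kᵀ)(X_k X_lᵀ) ⪯ X_j X_lᵀ holds, i.e. every entry of X_j X_kᵀ X_k X_lᵀ is at most the corresponding entry of X_j X_lᵀ. -/

import Mathlib

open Matrix BigOperators

/-- A partial permutation matrix: all entries in {0,1}, each row sum ≤ 1,
each column sum ≤ 1. -/
def IsPartialPermMatrix {m d : ℕ} (X : Matrix (Fin m) (Fin d) ℝ) : Prop :=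
  (∀ a b, X a b = 0 ∨ X a b = 1) ∧
  (∀ a, ∑ b, X a b ≤ 1) ∧
  (∀ b, ∑ a, X a b ≤ 1)

namespace IsPartialPermMatrix

variable {m d : ℕ} {X : Matrix (Fin m) (Fin d) ℝ}

theorem nonneg (hX : IsPartialPermMatrix X) (a : Fin m) (b : Fin d) : 0 ≤ X a b := by
  rcases hX.1 a b with h | h <;> simp [h]

theorem mul_self (hX : IsPartialPermMatrix X) (a : Fin m) (b : Fin d) :
    X a b * X a b = X a b := by
  rcases hX.1 a b with h | h <;> simp [h]

theorem mul_eq_zero_of_ne (hX : IsPartialPermMatrix X) (a : Fin m) {b c : Fin d} (hbc : b ≠ c) :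
    X a b * X a c = 0 := by
  have hsum : X a b + X a c ≤ 1 := by
    rw [← Finset.sum_pair hbc]
    exact (Finset.sum_le_sum_of_subset_of_nonneg (Finset.subset_univ _)
      fun i _ _ => hX.nonneg a i).trans (hX.2.1 a)
  rcases hX.1 a b with hb | hb
  · simp [hb]
  · rcases hX.1 a c with hc | hc
    · simp [hc]
    · norm_num [hb, hc] at hsum

/-- The Gram matrix of the columns of a partial permutation matrix is entrywise at most the
identity. -/
theorem transpose_mul_self_apply_le_one (hX : IsPartialPermMatrix X) (b c : Fin d) :
    (Xᵀ * X) b c ≤ (1 : Matrix (Fin d) (Fin d) ℝ) b c := by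
  rw [Matrix.mul_apply]
  rcases eq_or_ne b c with rfl | hbc
  · simpa [hX.mul_self] using hX.2.2 b
  · simp [hX.mul_eq_zero_of_ne _ hbc, hbc]

end IsPartialPermMatrix

/-- Transitivity-type entrywise inequality for composed pairwise matchings
built from partial permutation matrices. -/
theorem composed_matching_le
    (mj mk ml d : ℕ)
    (Xj : Matrix (Fin mj) (Fin d) ℝ)
    (Xk : Matrix (Fin mk) (Fin d) ℝ)
    (Xl : Matrix (Fin ml) (Fin d) ℝ)
    (hj : IsPartialPermMatrix Xj)
    (hk : IsPartialPermMatrix Xk)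
    (hl : IsPartialPermMatrix Xl) :
    ∀ (a : Fin mj) (b : Fin ml),
      ((Xj * Xkᵀ) * (Xk * Xlᵀ)) a b ≤ (Xj * Xlᵀ) a b := by
  intro a b
  calc ((Xj * Xkᵀ) * (Xk * Xlᵀ)) a b = (Xj * (Xkᵀ * Xk) * Xlᵀ) a b := by
        simp only [Matrix.mul_assoc]
    _ ≤ (Xj * (1 : Matrix (Fin d) (Fin d) ℝ) * Xlᵀ) a b := by
        rw [Matrix.mul_apply, Matrix.mul_apply]
        refine Finset.sum_le_sum fun i _ => mul_le_mul_of_nonneg_right ?_ (hl.nonneg b i)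
        rw [Matrix.mul_apply, Matrix.mul_apply]
        exact Finset.sum_le_sum fun c _ =>
          mul_le_mul_of_nonneg_left (hk.transpose_mul_self_apply_le_one c i) (hj.nonneg a c)
    _ = (Xj * Xlᵀ) a b := by rw [Matrix.mul_one]
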